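/- Let β > 0 and define p_0 := 0 and, for t = 1,…,T: p_t := 1 if Δ(t) = 0; p_t := 0 if Δ(t) = −β; otherwise, if Δ(t) ≥ Δ(t−1) then p_t := p_{t−1} + (1 − p_{t−1})·(1 − Δ(t)/Δ(t−1)), and if Δ(t) < Δ(t−1) then p_t := p_{t−1}·(β + Δ(t))/(β + Δ(t−1)). Then p_t = (β + Δ(t))/β for all t = 0,1,…,T. (These p_t are the marginal probabilities Pr[s_t = 1] of the randomized algorithm gCHASE_s^r, so its state distribution coincides with the trajectory of cCHASE.) -/

import Mathlib

/-- The cumulative cost difference `Δ(t)`, with `Δ(0) = −β` and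
`Δ(t) = min{0, max{−β, Δ(t−1) + (g_t(0) − g_t(1))}}`. -/
noncomputable def Δfun (β : ℝ) (g0 g1 : ℕ → ℝ) : ℕ → ℝ
  | 0 => -β
  | t + 1 => min 0 (max (-β) (Δfun β g0 g1 t + (g0 (t + 1) - g1 (t + 1))))

/-- The marginal probabilities `p_t = Pr[s_t = 1]` of the randomized online
algorithm gCHASE_s^r: `p_0 = 0`; `p_t = 1` if `Δ(t) = 0`; `p_t = 0` if
`Δ(t) = −β`; otherwise `p_t = p_{t−1} + (1 − p_{t−1})·(1 − Δ(t)/Δ(t−1))` if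
`Δ(t−1) ≤ Δ(t)`, and `p_t = p_{t−1}·(β + Δ(t))/(β + Δ(t−1))` if
`Δ(t) < Δ(t−1)`. -/
noncomputable def pRec (β : ℝ) (g0 g1 : ℕ → ℝ) : ℕ → ℝ
  | 0 => 0
  | t + 1 =>
      if Δfun β g0 g1 (t + 1) = 0 then 1
      else if Δfun β g0 g1 (t + 1) = -β then 0
      else if Δfun β g0 g1 t ≤ Δfun β g0 g1 (t + 1) then
        pRec β g0 g1 t
          + (1 - pRec β g0 g1 t) * (1 - Δfun β g0 g1 (t + 1) / Δfun β g0 g1 t)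
      else
        pRec β g0 g1 t * (β + Δfun β g0 g1 (t + 1)) / (β + Δfun β g0 g1 t)

/-- the marginal probabilities of gCHASE_s^r coincide with the
trajectory of the continuous algorithm cCHASE: `p_t = (β + Δ(t))/β` for all
`t = 0, 1, …, T`. -/
theorem stmt6 (T : ℕ) (β : ℝ) (hβ : 0 < β) (g0 g1 : ℕ → ℝ)
    (hg0 : ∀ t, 1 ≤ t → t ≤ T → 0 ≤ g0 t) (hg1 : ∀ t, 1 ≤ t → t ≤ T → 0 ≤ g1 t) :
    ∀ t, t ≤ T → pRec β g0 g1 t = (β + Δfun β g0 g1 t) / β := by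
  have lo : ∀ t, -β ≤ Δfun β g0 g1 t := by
    intro t
    cases t with
    | zero => simp [Δfun]
    | succ t =>
      rw [Δfun]
      exact le_min (by linarith) (le_max_left _ _)
  have hi : ∀ t, Δfun β g0 g1 t ≤ 0 := by
    intro t
    cases t with
    | zero => simp only [Δfun]; linarith
    | succ t =>
      rw [Δfun]
      exact min_le_left _ _
  intro t
  induction t with
  | zero => intro _; simp [pRec, Δfun]
  | succ t ih =>
    intro ht
    have ih' := ih (by omega)
    have l1 := lo (t + 1)
    have h1 := hi (t + 1)
    have hb : β ≠ 0 := hβ.ne'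
    rw [pRec, ih']
    generalize Δfun β g0 g1 (t + 1) = b at *
    generalize Δfun β g0 g1 t = a at *
    split_ifs with c1 c2 c3
    · subst c1; field_simp; simp
    · subst c2; simp
    · have : b < 0 := lt_of_le_of_ne h1 c1
      have ha : a ≠ 0 := by intro h; linarith
      field_simp
      ring
    · have : β + a ≠ 0 := by intro h; apply c3; linarith
      field_simp
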